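/- Let A_1, …, A_n be strongly porous at 0 subsets of ℝ⁺. Then the union A_1 ∪ … ∪ A_n is strongly porous at 0 if and only if the family {A_1, …, A_n} is coherently porous. -/

import Mathlib

/-!
The ratio `λ(E,h)/h` never exceeds `1`, so `E` is strongly porous at 0 exactly when this ratio comes
arbitrarily close to `1` along some `h → 0⁺` (`upperPorosity_eq_one_iff`).

If the union is strongly porous, a sequence witnessing this also witnesses the strong porosity of
each `A i`, because a gap of the union is a gap of `A i`.

Conversely, a gap of length more than `(1 - ε) h` inside `(0, h)` must contain the fixed interval
`(ε h, (1 - ε) h)` (`inter_eq_empty_of_lt_gapLength`). So if all the `A i` have such a gap at the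
same scale `h`, then `(ε h, (1 - ε) h)` misses their union, and `λ(⋃ i, A i, h) ≥ (1 - 2 ε) h`.
A sequence common to all the sets `UMP (A i)` provides such scales, finiteness of the family being
what turns an eventual property of each `A i` into one of all the `A i` simultaneously.
-/

open Filter Set

/-- `gapLength E h` = λ(E,h): the length of the largest open subinterval of (0,h)
containing no point of `E` (0 if no such interval exists). -/
noncomputable def gapLength (E : Set ℝ) (h : ℝ) : ℝ :=
  sSup {l : ℝ | ∃ a b : ℝ, 0 ≤ a ∧ a ≤ b ∧ b ≤ h ∧ Set.Ioo a b ∩ E = ∅ ∧ l = b - a}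

/-- The right upper porosity of `E` at 0. -/
noncomputable def upperPorosity (E : Set ℝ) : ℝ :=
  Filter.limsup (fun h => gapLength E h / h) (nhdsWithin (0:ℝ) (Set.Ioi 0))

/-- The right lower porosity of `E` at 0. -/
noncomputable def lowerPorosity (E : Set ℝ) : ℝ :=
  Filter.liminf (fun h => gapLength E h / h) (nhdsWithin (0:ℝ) (Set.Ioi 0))

/-- `UMP E`: sequences of positive reals tending to 0 along which the upper limit
in the definition of porosity is attained. -/
def UMP (E : Set ℝ) : Set (ℕ → ℝ) :=
  {h | (∀ n, 0 < h n) ∧ Filter.Tendsto h Filter.atTop (nhds 0) ∧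
    Filter.Tendsto (fun n => gapLength E (h n) / h n) Filter.atTop (nhds (upperPorosity E))}

/-- The set of all strongly porous at 0 subsets of ℝ⁺. -/
def SP : Set (Set ℝ) := {E | E ⊆ Set.Ici 0 ∧ upperPorosity E = 1}

/-- `I` is an ideal on the set `X`. -/
def IsIdealOn (X : Set ℝ) (I : Set (Set ℝ)) : Prop :=
  I.Nonempty ∧ (∀ B ∈ I, B ⊆ X) ∧ (∀ B ∈ I, ∀ C : Set ℝ, C ⊆ B → C ∈ I) ∧
    (∀ B ∈ I, ∀ C ∈ I, B ∪ C ∈ I) ∧ X ∉ I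

/-- `I` is a `Γ`-maximal ideal on `X`. -/
def IsMaximalIdealIn (X : Set ℝ) (Γ I : Set (Set ℝ)) : Prop :=
  IsIdealOn X I ∧ I ⊆ Γ ∧ ∀ J : Set (Set ℝ), IsIdealOn X J → I ⊆ J → J ⊆ Γ → I = J

/-- `Î(SP)`: the intersection of all SP-maximal ideals on ℝ⁺. -/
def hatISP : Set (Set ℝ) :=
  {A | ∀ I : Set (Set ℝ), IsMaximalIdealIn (Set.Ici 0) SP I → A ∈ I}

/-- The q-blow up `E(q)` of a set `E ⊆ ℝ⁺`. -/
def blowUp (E : Set ℝ) (q : ℝ) : Set ℝ := ⋃ x ∈ E, Set.Ioo (q⁻¹ * x) (q * x)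

theorem gapLength_bddAbove (E : Set ℝ) (h : ℝ) :
    BddAbove {l : ℝ | ∃ a b : ℝ, 0 ≤ a ∧ a ≤ b ∧ b ≤ h ∧ Set.Ioo a b ∩ E = ∅ ∧ l = b - a} := by
  refine ⟨h, ?_⟩
  rintro l ⟨a, b, ha, hab, hb, -, rfl⟩
  linarith

theorem le_gapLength {E : Set ℝ} {h a b : ℝ} (ha : 0 ≤ a) (hab : a ≤ b) (hb : b ≤ h)
    (hE : Set.Ioo a b ∩ E = ∅) : b - a ≤ gapLength E h :=
  le_csSup (gapLength_bddAbove E h) ⟨a, b, ha, hab, hb, hE, rfl⟩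

theorem gapLength_nonempty (E : Set ℝ) {h : ℝ} (hh : 0 < h) :
    {l : ℝ | ∃ a b : ℝ, 0 ≤ a ∧ a ≤ b ∧ b ≤ h ∧ Set.Ioo a b ∩ E = ∅ ∧ l = b - a}.Nonempty :=
  ⟨0, 0, 0, le_rfl, le_rfl, hh.le, by simp, by simp⟩

theorem gapLength_le (E : Set ℝ) {h : ℝ} (hh : 0 < h) : gapLength E h ≤ h := by
  refine csSup_le (gapLength_nonempty E hh) ?_
  rintro l ⟨a, b, ha, hab, hb, -, rfl⟩
  linarith

theorem gapLength_nonneg (E : Set ℝ) {h : ℝ} (hh : 0 < h) : 0 ≤ gapLength E h := by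
  have := le_gapLength (E := E) (h := h) (a := 0) (b := 0) le_rfl le_rfl hh.le (by simp)
  simpa using this

theorem gapLength_anti {E F : Set ℝ} (hEF : E ⊆ F) {h : ℝ} (hh : 0 < h) :
    gapLength F h ≤ gapLength E h := by
  refine csSup_le (gapLength_nonempty F hh) ?_
  rintro l ⟨a, b, ha, hab, hb, hF, rfl⟩
  exact le_gapLength ha hab hb
    (Set.subset_eq_empty (Set.inter_subset_inter_right _ hEF) hF)

/-- A gap of length more than `(1 - ε) h` in `(0, h)` starts before `ε h` and ends after
`(1 - ε) h`. -/
theorem inter_eq_empty_of_lt_gapLength {E : Set ℝ} {h ε : ℝ} (hh : 0 < h)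
    (hlt : (1 - ε) * h < gapLength E h) : Set.Ioo (ε * h) ((1 - ε) * h) ∩ E = ∅ := by
  obtain ⟨l, ⟨a, b, ha, hab, hb, hE, rfl⟩, hl⟩ := exists_lt_of_lt_csSup (gapLength_nonempty E hh) hlt
  refine Set.subset_eq_empty (Set.inter_subset_inter_left _ ?_) hE
  exact Set.Ioo_subset_Ioo (by linarith) (by linarith)

theorem upperPorosity_eq_one_iff (E : Set ℝ) :
    upperPorosity E = 1 ↔
      ∀ ε > 0, ∃ᶠ h in nhdsWithin (0 : ℝ) (Set.Ioi 0), 1 - ε < gapLength E h / h := by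
  have hpos : ∀ᶠ h in nhdsWithin (0 : ℝ) (Set.Ioi 0), 0 < h := eventually_mem_nhdsWithin
  have hle : ∀ᶠ h in nhdsWithin (0 : ℝ) (Set.Ioi 0), gapLength E h / h ≤ 1 :=
    hpos.mono fun h hh => div_le_one_of_le₀ (gapLength_le E hh) hh.le
  have hge : ∀ᶠ h in nhdsWithin (0 : ℝ) (Set.Ioi 0), 0 ≤ gapLength E h / h :=
    hpos.mono fun h hh => div_nonneg (gapLength_nonneg E hh) hh.le
  have hbdd : IsBoundedUnder (· ≤ ·) (nhdsWithin (0 : ℝ) (Set.Ioi 0))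
      (fun h => gapLength E h / h) := isBoundedUnder_of_eventually_le hle
  have hcobdd : IsCoboundedUnder (· ≤ ·) (nhdsWithin (0 : ℝ) (Set.Ioi 0))
      (fun h => gapLength E h / h) :=
    (isBoundedUnder_of_eventually_ge hge).isCoboundedUnder_le
  constructor
  · intro h1 ε hε
    refine frequently_lt_of_lt_limsup hcobdd ?_
    change 1 - ε < upperPorosity E
    linarith
  · intro hfreq
    refine le_antisymm (limsup_le_of_le hcobdd hle) ?_
    refine le_of_forall_pos_le_add fun ε hε => ?_
    have : 1 - ε ≤ upperPorosity E :=
      le_limsup_of_frequently_le ((hfreq ε hε).mono fun h hh => hh.le) hbdd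
    linarith

theorem stmt6 (n : ℕ) (hn : 0 < n) (A : Fin n → Set ℝ)
    (hA : ∀ i, A i ⊆ Set.Ici 0)
    (hsp : ∀ i, upperPorosity (A i) = 1) :
    upperPorosity (⋃ i, A i) = 1 ↔ (⋂ i, UMP (A i)).Nonempty := by
  rw [upperPorosity_eq_one_iff]
  constructor
  · intro hU
    have hex : ∀ k : ℕ, ∃ h : ℝ, 0 < h ∧ h < 1 / ((k : ℝ) + 1) ∧
        1 - 1 / ((k : ℝ) + 1) < gapLength (⋃ i, A i) h / h := by
      intro k
      have hk : (0 : ℝ) < 1 / ((k : ℝ) + 1) := Nat.one_div_pos_of_nat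
      obtain ⟨h, hgap, hpos, hlt⟩ := ((hU _ hk).and_eventually (Ioo_mem_nhdsGT hk)).exists
      exact ⟨h, hpos, hlt, hgap⟩
    choose h hpos hlt hgap using hex
    have hlim := tendsto_one_div_add_atTop_nhds_zero_nat (𝕜 := ℝ)
    have hlim1 := hlim.const_sub 1
    rw [sub_zero] at hlim1
    refine ⟨h, Set.mem_iInter.2 fun i => ⟨hpos, ?_, ?_⟩⟩
    · exact squeeze_zero (fun k => (hpos k).le) (fun k => (hlt k).le) hlim
    · rw [hsp i]
      refine tendsto_of_tendsto_of_tendsto_of_le_of_le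
        hlim1 tendsto_const_nhds (fun k => ?_) (fun k => ?_)
      · exact (hgap k).le.trans (div_le_div_of_nonneg_right
          (gapLength_anti (Set.subset_iUnion A i) (hpos k)) (hpos k).le)
      · exact div_le_one_of_le₀ (gapLength_le _ (hpos k)) (hpos k).le
  · rintro ⟨h, hh⟩ ε hε
    rw [Set.mem_iInter] at hh
    have hpos := (hh ⟨0, hn⟩).1
    have hlim : Tendsto h atTop (nhdsWithin 0 (Set.Ioi 0)) :=
      tendsto_nhdsWithin_iff.2 ⟨(hh ⟨0, hn⟩).2.1, Eventually.of_forall hpos⟩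
    -- `δ ≤ 1 / 2` keeps the interval `(δ h, (1 - δ) h)` well formed, `2 δ < ε` makes it long enough.
    obtain ⟨δ, hδ, hδ2, hδε⟩ : ∃ δ : ℝ, 0 < δ ∧ δ ≤ 1 / 2 ∧ 2 * δ < ε :=
      ⟨min (1 / 2) (ε / 3), by positivity, min_le_left _ _, by
        linarith [min_le_right (1 / 2) (ε / 3)]⟩
    have hev : ∀ᶠ k in atTop, ∀ i, 1 - δ < gapLength (A i) (h k) / h k := by
      refine eventually_all.2 fun i => (hh i).2.2.eventually_const_lt ?_
      rw [hsp i]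
      linarith
    refine hlim.frequently (hev.mono fun k hk => ?_).frequently
    have hk0 := hpos k
    have hempty : Set.Ioo (δ * h k) ((1 - δ) * h k) ∩ ⋃ i, A i = ∅ := by
      rw [Set.inter_iUnion, Set.iUnion_eq_empty]
      exact fun i => inter_eq_empty_of_lt_gapLength hk0 ((lt_div_iff₀ hk0).1 (hk i))
    have hlen := le_gapLength (h := h k) (by positivity) (by nlinarith) (by nlinarith) hempty
    rw [lt_div_iff₀ hk0]
    nlinarith
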